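/- For every f ∈ A_LP one has C₁* ≤ Z̃(f), where Z̃(f) := r(f) + (2/r(f)) ∫₀^{r(f)} f(x) x dx + 3 ∫_{r(f)}^{(3/2)r(f)} f(x) dx − (2/r(f)) ∫_{r(f)}^{(3/2)r(f)} f(x) x dx. -/

import Mathlib

open MeasureTheory Filter
open scoped Classical

noncomputable section

/-- The Fourier transform `ĝ(α) = ∫ g(x) e^{-2πiαx} dx` of a real-valued function. -/
def fourierT (g : ℝ → ℝ) (α : ℝ) : ℂ :=
  ∫ x : ℝ, (g x : ℂ) * Complex.exp (-(2 * Real.pi * α * x : ℝ) * Complex.I)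

/-- The class `A₁` of continuous, even, non-negative functions `g ∈ L¹(ℝ)`
with `ĝ(α) ≤ 0` for `|α| ≥ 1` (such `ĝ` is real-valued since `g` is even and real). -/
def memA1 (g : ℝ → ℝ) : Prop :=
  Continuous g ∧ (∀ x, g (-x) = g x) ∧ (∀ x, 0 ≤ g x) ∧ MeasureTheory.Integrable g ∧
    ∀ α : ℝ, 1 ≤ |α| → (fourierT g α).re ≤ 0

/-- The functional `ρ₁(g) = ĝ(0) + ∫_{-1}^{1} ĝ(α)|α| dα`. -/
def rho1 (g : ℝ → ℝ) : ℝ :=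
  (fourierT g 0).re + ∫ α in (-1 : ℝ)..1, (fourierT g α).re * |α|

/-- The constant `C₁ = inf ρ₁(g)/g(0)` over nonzero `g ∈ A₁` with `g(0) > 0`. -/
def C1 : ℝ :=
  sInf {c : ℝ | ∃ g : ℝ → ℝ, memA1 g ∧ g ≠ 0 ∧ 0 < g 0 ∧ c = rho1 g / g 0}

/-- The functional `ρ₁*(g) = ĝ(0) + ∫_{-1}^{1} ĝ(α)|α| dα + ∫_{1≤|α|≤3/2} ĝ(α)(3/2-|α|) dα`. -/
def rho1star (g : ℝ → ℝ) : ℝ :=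
  (fourierT g 0).re + (∫ α in (-1 : ℝ)..1, (fourierT g α).re * |α|) +
    ∫ α in {α : ℝ | 1 ≤ |α| ∧ |α| ≤ 3 / 2}, (fourierT g α).re * (3 / 2 - |α|)

/-- The constant `C₁* = inf ρ₁*(g)/g(0)` over nonzero `g ∈ A₁` with `g(0) > 0`. -/
def C1star : ℝ :=
  sInf {c : ℝ | ∃ g : ℝ → ℝ, memA1 g ∧ g ≠ 0 ∧ 0 < g 0 ∧ c = rho1star g / g 0}

/-- The Cohn–Elkies linear programming class `A_LP`: even continuous `f ∈ L¹(ℝ)` with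
`f(0) = f̂(0) = 1`, `f̂ ≥ 0`, and `f` eventually non-positive. -/
def memALP (f : ℝ → ℝ) : Prop :=
  Continuous f ∧ (∀ x, f (-x) = f x) ∧ MeasureTheory.Integrable f ∧
    f 0 = 1 ∧ fourierT f 0 = 1 ∧ (∀ α : ℝ, 0 ≤ (fourierT f α).re) ∧
    ∃ r : ℝ, ∀ x : ℝ, r ≤ |x| → f x ≤ 0

/-- The last sign change `r(f) = inf{r > 0 : f(x) ≤ 0 for all |x| ≥ r}`. -/
def lastSign (f : ℝ → ℝ) : ℝ :=
  sInf {r : ℝ | 0 < r ∧ ∀ x : ℝ, r ≤ |x| → f x ≤ 0}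

/-- The functional `Z̃(f) = r(f) + (2/r(f)) ∫₀^{r(f)} f(x) x dx
+ 3 ∫_{r(f)}^{(3/2)r(f)} f(x) dx − (2/r(f)) ∫_{r(f)}^{(3/2)r(f)} f(x) x dx`. -/
def Ztilde (f : ℝ → ℝ) : ℝ :=
  lastSign f + (2 / lastSign f) * (∫ x in (0 : ℝ)..(lastSign f), f x * x) +
    3 * (∫ x in (lastSign f)..(3 / 2 * lastSign f), f x) -
    (2 / lastSign f) * ∫ x in (lastSign f)..(3 / 2 * lastSign f), f x * x

/-!
For `f` that is non-positive outside `(-r, r)`, the function `g(x) = f̂(x / r)` lies in `A₁`: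
it is non-negative because `f̂ ≥ 0`, and Fourier inversion gives `ĝ(α) = r f(rα)`. Substituting
`x = rα` in `ρ₁*(g)` yields the bound. Inversion requires `f̂ ∈ L¹`, which is not assumed: it
follows from `f̂ ≥ 0` because the Gaussian means `∫ exp(-w² / c) f̂(w) dw` tend to `f(0)`.

Since `C₁*` is an infimum of reals, it is also necessary to know that `ρ₁*` is bounded below on
`A₁`. By Fubini, `ρ₁*(g) = ∫ g(x) K(2πx) dx` for an explicit kernel `K`, and `K ≥ 0` amounts to
`(1 - cos t)(3 - 4 cos² t) ≤ 2t(t + sin t cos t)`. Before `π/2` this follows from `sin t ≤ t`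
and, when `cos t` is small, `1 - t²/2 ≤ cos t`; after `π/2` it follows from `π/2 - cos t ≤ t`.
-/

open Set
open scoped FourierTransform Topology

section TrigonometricInequality

open Real

lemma one_sub_cos_mul_three_sub_le_of_le_pi_div_two {t : ℝ} (ht₀ : 0 ≤ t) (ht : t ≤ π / 2) :
    (1 - cos t) * (3 - 4 * cos t ^ 2) ≤ 2 * t * (t + sin t * cos t) := by
  have hcos : 0 ≤ cos t := cos_nonneg_of_neg_pi_div_two_le_of_le (by linarith) ht
  have hsin : 0 ≤ sin t := sin_nonneg_of_nonneg_of_le_pi ht₀ (by linarith)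
  rcases le_total (cos t) (1 / 5) with hsmall | hlarge
  · have hsq : 8 / 5 ≤ t ^ 2 := by linarith [one_sub_sq_div_two_le_cos (x := t)]
    nlinarith [mul_nonneg ht₀ (mul_nonneg hsin hcos), pow_nonneg hcos 3]
  · calc (1 - cos t) * (3 - 4 * cos t ^ 2)
        ≤ (1 - cos t) * (2 * (1 + cos t) ^ 2) :=
          mul_le_mul_of_nonneg_left (by nlinarith) (by linarith [cos_le_one t])
      _ = 2 * sin t * (sin t + sin t * cos t) := by
          linear_combination (-2 - 2 * cos t) * sin_sq_add_cos_sq t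
      _ ≤ 2 * t * (t + sin t * cos t) := by gcongr <;> exact sin_le ht₀

lemma one_sub_cos_mul_three_sub_le_of_pi_div_two_le {t : ℝ} (ht : π / 2 ≤ t) :
    (1 - cos t) * (3 - 4 * cos t ^ 2) ≤ 2 * t * (t + sin t * cos t) := by
  have hπ : 3.14 < π := pi_gt_d2
  have hprod : -(1 / 2) ≤ sin t * cos t := by
    nlinarith [sq_nonneg (sin t + cos t), sin_sq_add_cos_sq t]
  have hcos : π / 2 - cos t ≤ t := by
    have := sin_le (x := t - π / 2) (by linarith)
    rw [sin_sub_pi_div_two] at this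
    linarith
  have hlower : 2 * t * (t - 1 / 2) ≤ 2 * t * (t + sin t * cos t) :=
    mul_le_mul_of_nonneg_left (by linarith) (by linarith)
  refine le_trans ?_ hlower
  rcases le_total 0 (cos t) with hpos | hneg
  · nlinarith [cos_le_one t, mul_nonneg hpos (sub_nonneg.2 (cos_le_one t)), pow_nonneg hpos 3]
  · have hbound : 2 * (1.57 - cos t) * (1.07 - cos t) ≤ 2 * t * (t - 1 / 2) := by
      apply mul_le_mul <;> linarith
    nlinarith [pow_nonneg (neg_nonneg.2 hneg) 3, neg_one_le_cos t]

lemma one_sub_cos_mul_three_sub_le (t : ℝ) :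
    (1 - cos t) * (3 - 4 * cos t ^ 2) ≤ 2 * t * (t + sin t * cos t) := by
  have of_nonneg {u : ℝ} (hu : 0 ≤ u) :
      (1 - cos u) * (3 - 4 * cos u ^ 2) ≤ 2 * u * (u + sin u * cos u) :=
    (le_total u (π / 2)).elim (one_sub_cos_mul_three_sub_le_of_le_pi_div_two hu)
      one_sub_cos_mul_three_sub_le_of_pi_div_two_le
  rcases le_total 0 t with ht | ht
  · exact of_nonneg ht
  · have := of_nonneg (neg_nonneg.2 ht)
    rw [cos_neg, sin_neg] at this
    linarith

end TrigonometricInequality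

section Integrals

lemma integral_cos_mul_affine {w : ℝ} (hw : w ≠ 0) (a b p q : ℝ) :
    ∫ x in a..b, Real.cos (w * x) * (p + q * x) =
      ((p + q * b) * Real.sin (w * b) - (p + q * a) * Real.sin (w * a)) / w +
        q * (Real.cos (w * b) - Real.cos (w * a)) / w ^ 2 := by
  have hderiv : ∀ x ∈ uIcc a b, HasDerivAt
      (fun x => (p + q * x) * Real.sin (w * x) / w + q * Real.cos (w * x) / w ^ 2)
      (Real.cos (w * x) * (p + q * x)) x := by
    intro x _
    have hlin (c : ℝ) : HasDerivAt (fun x => c * x) c x := by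
      simpa using (hasDerivAt_id x).const_mul c
    convert! ((((hlin q).const_add p).mul (hlin w).sin).div_const w).add
      (((hlin w).cos.const_mul q).div_const (w ^ 2)) using 1
    field_simp
    ring
  rw [intervalIntegral.integral_eq_sub_of_hasDerivAt hderiv
    (Continuous.intervalIntegrable (by fun_prop) _ _)]
  ring

lemma setIntegral_comp_abs_of_mem_Icc (f : ℝ → ℝ) {a b : ℝ} (ha : 0 ≤ a) (hab : a ≤ b) :
    ∫ x in {x | |x| ∈ Icc a b}, f |x| = 2 * ∫ x in a..b, f x := by
  have hmeas : MeasurableSet {x : ℝ | |x| ∈ Icc a b} := measurableSet_Icc.preimage measurable_abs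
  have hsub : Icc a b ⊆ Ici 0 := fun _ hx => ha.trans hx.1
  calc ∫ x in {x | |x| ∈ Icc a b}, f |x|
      = ∫ x, (Icc a b).indicator f |x| := by
        rw [← integral_indicator hmeas]
        rfl
    _ = 2 * ∫ x in Ici 0, (Icc a b).indicator f x := by
        rw [integral_comp_abs, integral_Ici_eq_integral_Ioi]
    _ = 2 * ∫ x in a..b, f x := by
        rw [setIntegral_indicator measurableSet_Icc,
          inter_eq_self_of_subset_right hsub,
          integral_Icc_eq_integral_Ioc, intervalIntegral.integral_of_le hab]

lemma intervalIntegral_comp_abs (f : ℝ → ℝ) {b : ℝ} (hb : 0 ≤ b) :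
    ∫ x in -b..b, f |x| = 2 * ∫ x in 0..b, f x := by
  rw [← setIntegral_comp_abs_of_mem_Icc f le_rfl hb,
    intervalIntegral.integral_of_le (by linarith), ← integral_Icc_eq_integral_Ioc]
  congr 2
  ext x
  simp [abs_le]

lemma integral_dilation_mul_affine {f : ℝ → ℝ} {r a b : ℝ} (hr : r ≠ 0)
    (hf : IntervalIntegrable f volume (r * a) (r * b)) (p q : ℝ) :
    ∫ x in a..b, r * f (r * x) * (p + q * x) =
      p * (∫ x in (r * a)..(r * b), f x) + q / r * ∫ x in (r * a)..(r * b), f x * x := by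
  calc ∫ x in a..b, r * f (r * x) * (p + q * x)
      = r * ∫ x in a..b, p * f (r * x) + q / r * (f (r * x) * (r * x)) := by
        rw [← intervalIntegral.integral_const_mul]
        congr 1 with x
        field_simp
    _ = ∫ x in (r * a)..(r * b), p * f x + q / r * (f x * x) :=
        intervalIntegral.mul_integral_comp_mul_left (f := fun x => p * f x + q / r * (f x * x)) r
    _ = _ := by
        rw [intervalIntegral.integral_add (hf.const_mul p)
          ((hf.mul_continuousOn (by fun_prop : ContinuousOn (fun x : ℝ => x) _)).const_mul (q / r)),
          intervalIntegral.integral_const_mul, intervalIntegral.integral_const_mul]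

lemma integrable_of_nonneg_of_tendsto_integral {α : Type*} [MeasurableSpace α] {μ : Measure α}
    {G : ℕ → α → ℝ} {h : α → ℝ} {l : ℝ} (hG : ∀ n, Integrable (G n) μ)
    (hG_nonneg : ∀ n x, 0 ≤ G n x) (hGh : ∀ x, Tendsto (G · x) atTop (𝓝 (h x)))
    (hl : Tendsto (fun n => ∫ x, G n x ∂μ) atTop (𝓝 l)) : Integrable h μ := by
  have hl_enorm : Tendsto (fun n => ∫⁻ x, ‖G n x‖ₑ ∂μ) atTop (𝓝 (ENNReal.ofReal l)) := by
    refine ((ENNReal.continuous_ofReal.tendsto l).comp hl).congr fun n => ?_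
    rw [← ofReal_integral_norm_eq_lintegral_enorm (hG n)]
    simp only [Function.comp_apply, Real.norm_of_nonneg (hG_nonneg n _)]
  refine ⟨aestronglyMeasurable_of_tendsto_ae atTop (fun n => (hG n).1) (ae_of_all _ hGh), ?_⟩
  calc ∫⁻ x, ‖h x‖ₑ ∂μ
      = ∫⁻ x, liminf (fun n => ‖G n x‖ₑ) atTop ∂μ :=
        lintegral_congr fun x => (hGh x).enorm.liminf_eq.symm
    _ ≤ liminf (fun n => ∫⁻ x, ‖G n x‖ₑ ∂μ) atTop :=
        lintegral_liminf_le' fun n => (hG n).1.enorm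
    _ = ENNReal.ofReal l := hl_enorm.liminf_eq
    _ < ⊤ := ENNReal.ofReal_lt_top

end Integrals

section FourierIntegrability

variable {V E : Type*} [NormedAddCommGroup V] [InnerProductSpace ℝ V] [MeasurableSpace V]
  [BorelSpace V] [FiniteDimensional ℝ V] [NormedAddCommGroup E] [NormedSpace ℂ E]

lemma integrable_cexp_neg_mul_sq_norm {b : ℝ} (hb : 0 < b) :
    Integrable fun v : V => Complex.exp (-b * ‖v‖ ^ 2) := by
  simpa using GaussianFourier.integrable_cexp_neg_mul_sq_norm_add (b := b) (by simpa) 0 (0 : V)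

lemma continuous_fourier_of_integrable {F : V → E} (hF : Integrable F) : Continuous (𝓕 F) :=
  VectorFourier.fourierIntegral_continuous Real.continuous_fourierChar
    (innerSL ℝ).continuous₂ hF

lemma integrable_gaussian_smul_fourier {F : V → E} (hF : Integrable F) {b : ℝ} (hb : 0 < b) :
    Integrable fun w : V => Complex.exp (-b * ‖w‖ ^ 2) • 𝓕 F w :=
  (integrable_cexp_neg_mul_sq_norm hb).smul_bdd (∫ v, ‖F v‖)
    (continuous_fourier_of_integrable hF).aestronglyMeasurable
    (ae_of_all _ (VectorFourier.norm_fourierIntegral_le_integral_norm _ _ _ F))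

lemma integral_gaussian_smul_fourier [CompleteSpace E] {F : V → E} (hF : Integrable F) {b : ℝ}
    (hb : 0 < b) :
    ∫ w : V, Complex.exp (-b * ‖w‖ ^ 2) • 𝓕 F w =
      ∫ v : V, ((Real.pi / b) ^ (Module.finrank ℝ V / 2 : ℂ) *
        Complex.exp (-Real.pi ^ 2 * ‖v‖ ^ 2 / b)) • F v := by
  have hflip := VectorFourier.integral_fourierIntegral_smul_eq_flip (L := innerₗ V)
    Real.continuous_fourierChar continuous_inner (integrable_cexp_neg_mul_sq_norm hb) hF
  rw [flip_innerₗ] at hflip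
  refine hflip.symm.trans (integral_congr_ae (ae_of_all _ fun v => ?_))
  exact congrArg (· • F v) (fourier_gaussian_innerProductSpace (b := b) (by simpa) v)

lemma tendsto_integral_gaussian_smul_fourier [CompleteSpace E] {F : V → E}
    (hF : Integrable F) (hF₀ : ContinuousAt F 0) :
    Tendsto (fun c : ℝ => ∫ w : V, Complex.exp (-(c⁻¹ : ℝ) * ‖w‖ ^ 2) • 𝓕 F w) atTop
      (𝓝 (F 0)) := by
  refine (Real.tendsto_integral_gaussian_smul' hF hF₀).congr' ?_
  filter_upwards [Ioi_mem_atTop 0] with c hc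
  rw [integral_gaussian_smul_fourier hF (inv_pos.2 hc)]
  congr 1 with v
  rw [zero_sub, norm_neg, Complex.ofReal_inv, div_inv_eq_mul, div_inv_eq_mul]
  congr 3
  ring

lemma integrable_re_fourier_of_nonneg {F : V → ℂ} (hF : Integrable F) (hF₀ : ContinuousAt F 0)
    (h_nonneg : ∀ w, 0 ≤ (𝓕 F w).re) : Integrable fun w => (𝓕 F w).re := by
  let c : ℕ → ℝ := fun n => n + 1
  have hc (n : ℕ) : 0 < (c n)⁻¹ := by positivity
  have hc_tendsto : Tendsto c atTop atTop :=
    tendsto_atTop_add_const_right _ _ tendsto_natCast_atTop_atTop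
  have hre (n : ℕ) (w : V) : (Complex.exp (-((c n)⁻¹ : ℝ) * ‖w‖ ^ 2) • 𝓕 F w).re =
      Real.exp (-(c n)⁻¹ * ‖w‖ ^ 2) * (𝓕 F w).re := by
    rw [smul_eq_mul, ← Complex.re_ofReal_mul]
    push_cast
    rfl
  have hdamped (n : ℕ) := integrable_gaussian_smul_fourier hF (hc n)
  refine integrable_of_nonneg_of_tendsto_integral (l := (F 0).re)
    (G := fun n w => Real.exp (-(c n)⁻¹ * ‖w‖ ^ 2) * (𝓕 F w).re)
    (fun n => (hdamped n).re.congr (ae_of_all _ (hre n)))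
    (fun n w => mul_nonneg (Real.exp_pos _).le (h_nonneg w)) (fun w => ?_) ?_
  · have hexponent : Tendsto (fun n => -(c n)⁻¹ * ‖w‖ ^ 2) atTop (𝓝 0) := by
      simpa using (tendsto_inv_atTop_zero.comp hc_tendsto).neg.mul_const (‖w‖ ^ 2)
    simpa using ((Real.continuous_exp.tendsto 0).comp hexponent).mul_const (𝓕 F w).re
  · refine ((Complex.continuous_re.tendsto _).comp
      ((tendsto_integral_gaussian_smul_fourier hF hF₀).comp hc_tendsto)).congr fun n => ?_
    exact (integral_re (hdamped n)).symm.trans (integral_congr_ae (ae_of_all _ (hre n)))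

end FourierIntegrability

section FourierT

variable {g : ℝ → ℝ}

lemma fourierT_eq_fourier (g : ℝ → ℝ) : fourierT g = 𝓕 (fun x => (g x : ℂ)) := by
  ext α
  rw [Real.fourier_real_eq_integral_exp_smul, fourierT]
  congr 1 with x
  rw [smul_eq_mul, mul_comm]
  congr 3
  push_cast
  ring

lemma continuous_fourierT (hg : Integrable g) : Continuous (fourierT g) := by
  rw [fourierT_eq_fourier]
  exact continuous_fourier_of_integrable hg.ofReal

lemma fourierT_re (hg : Integrable g) (α : ℝ) :
    (fourierT g α).re = ∫ x, g x * Real.cos (2 * Real.pi * α * x) := by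
  have hint : Integrable fun x : ℝ =>
      (g x : ℂ) * Complex.exp (-(2 * Real.pi * α * x : ℝ) * Complex.I) := by
    refine hg.ofReal.mul_bdd (c := 1) (Continuous.aestronglyMeasurable (by fun_prop))
      (ae_of_all _ fun x => ?_)
    rw [← Complex.ofReal_neg, Complex.norm_exp_ofReal_mul_I]
  refine (integral_re hint).symm.trans (integral_congr_ae (ae_of_all _ fun x => ?_))
  simp only [RCLike.re_eq_complex_re]
  rw [← Complex.ofReal_neg, Complex.re_ofReal_mul, Complex.exp_ofReal_mul_I_re, Real.cos_neg]

lemma fourierT_neg (g : ℝ → ℝ) (α : ℝ) :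
    fourierT g (-α) = (starRingEnd ℂ) (fourierT g α) := by
  rw [fourierT, fourierT, ← integral_conj]
  congr 1 with x
  rw [map_mul, ← Complex.exp_conj, map_mul, map_neg, Complex.conj_ofReal, Complex.conj_ofReal,
    Complex.conj_I]
  congr 2
  push_cast
  ring

lemma fourierT_re_neg (g : ℝ → ℝ) (α : ℝ) : (fourierT g (-α)).re = (fourierT g α).re := by
  rw [fourierT_neg, Complex.conj_re]

lemma fourierT_re_abs (g : ℝ → ℝ) (α : ℝ) : (fourierT g |α|).re = (fourierT g α).re := by
  rcases abs_choice α with h | h <;> rw [h]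
  exact fourierT_re_neg g α

lemma ofReal_fourierT_re (heven : ∀ x, g (-x) = g x) (α : ℝ) :
    ((fourierT g α).re : ℂ) = fourierT g α := by
  rw [← Complex.conj_eq_iff_re, ← fourierT_neg, fourierT, fourierT, ← integral_neg_eq_self]
  congr 1 with x
  rw [heven]
  congr 3
  push_cast
  ring

lemma fourierT_comp_div (g : ℝ → ℝ) {r : ℝ} (hr : r ≠ 0) (α : ℝ) :
    fourierT (fun x => g (x / r)) α = |r| * fourierT g (r * α) := by
  have hdiv := Measure.integral_comp_div (fun y : ℝ => (g y : ℂ) *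
    Complex.exp (-(2 * Real.pi * (r * α) * y : ℝ) * Complex.I)) r
  rw [Complex.real_smul] at hdiv
  rw [fourierT, fourierT, ← hdiv]
  congr 1 with x
  congr 5
  field_simp

lemma integrable_fourierT_re_of_nonneg (hg : Integrable g) (hg₀ : ContinuousAt g 0)
    (h_nonneg : ∀ α, 0 ≤ (fourierT g α).re) : Integrable fun α => (fourierT g α).re := by
  rw [fourierT_eq_fourier] at h_nonneg ⊢
  exact integrable_re_fourier_of_nonneg hg.ofReal (by fun_prop) h_nonneg

lemma fourierT_fourierT_re (hcont : Continuous g) (heven : ∀ x, g (-x) = g x)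
    (hg : Integrable g) (hg_hat : Integrable fun α => (fourierT g α).re) (x : ℝ) :
    fourierT (fun α => (fourierT g α).re) x = g x := by
  have hfourier : (fun α => ((fourierT g α).re : ℂ)) = 𝓕 (fun x => (g x : ℂ)) := by
    rw [← fourierT_eq_fourier]
    exact funext (ofReal_fourierT_re heven)
  have hinv : 𝓕⁻ (𝓕 (fun x => (g x : ℂ))) (-x) = g (-x) :=
    congrFun (Continuous.fourierInv_fourier_eq (by fun_prop) hg.ofReal
      (hfourier ▸ hg_hat.ofReal)) (-x)
  rw [fourierT_eq_fourier, hfourier, ← neg_neg x, ← Real.fourierInv_eq_fourier_neg, hinv, neg_neg,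
    heven]

section Fubini

variable {w : ℝ → ℝ} {ν : Measure ℝ}

lemma integrable_prod_mul_cos_mul (hg : Integrable g) (hw : Integrable w ν) :
    Integrable (Function.uncurry fun x α => g x * (Real.cos (2 * Real.pi * x * α) * w α))
      (volume.prod ν) := by
  refine ((hg.mul_prod hw).mul_bdd (c := 1)
    (g := fun p : ℝ × ℝ => Real.cos (2 * Real.pi * p.1 * p.2))
    (Continuous.aestronglyMeasurable (by fun_prop))
    (ae_of_all _ fun p => Real.abs_cos_le_one _)).congr (ae_of_all _ fun p => ?_)
  simp only [Function.uncurry]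
  ring

lemma integrable_mul_integral_cos_mul [SFinite ν] (hg : Integrable g) (hw : Integrable w ν) :
    Integrable fun x => g x * ∫ α, Real.cos (2 * Real.pi * x * α) * w α ∂ν := by
  simpa only [Function.uncurry, integral_const_mul] using
    (integrable_prod_mul_cos_mul hg hw).integral_prod_left

lemma integral_fourierT_re_mul [SFinite ν] (hg : Integrable g) (hw : Integrable w ν) :
    ∫ α, (fourierT g α).re * w α ∂ν =
      ∫ x, g x * ∫ α, Real.cos (2 * Real.pi * x * α) * w α ∂ν := by
  simp only [← integral_const_mul]
  rw [integral_integral_swap (integrable_prod_mul_cos_mul hg hw)]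
  congr 1 with α
  rw [fourierT_re hg, ← integral_mul_const]
  congr 1 with x
  rw [mul_right_comm _ α x, mul_assoc]

end Fubini

end FourierT

section Rho1star

/-- The kernel `K` such that `ρ₁*(g) = ∫ g(x) K(2πx) dx`: one plus the Fourier transform of the
even weight that equals `α` on `[0, 1]` and `3/2 - α` on `[1, 3/2]`. -/
def rho1starKernel (w : ℝ) : ℝ :=
  1 + 2 * (∫ α in (0 : ℝ)..1, Real.cos (w * α) * α) +
    2 * ∫ α in (1 : ℝ)..(3 / 2), Real.cos (w * α) * (3 / 2 - α)

lemma rho1starKernel_two_mul {t : ℝ} (ht : t ≠ 0) :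
    rho1starKernel (2 * t) =
      (2 * t * (t + Real.sin t * Real.cos t) - (1 - Real.cos t) * (3 - 4 * Real.cos t ^ 2)) /
        (2 * t ^ 2) := by
  have ht₂ : 2 * t ≠ 0 := mul_ne_zero two_ne_zero ht
  have hleft := integral_cos_mul_affine ht₂ 0 1 0 1
  have hright := integral_cos_mul_affine ht₂ 1 (3 / 2) (3 / 2) (-1)
  have hcos : Real.cos (2 * t * (3 / 2)) = 4 * Real.cos t ^ 3 - 3 * Real.cos t := by
    rw [← Real.cos_three_mul]
    ring_nf
  simp only [zero_add, one_mul, neg_one_mul, ← sub_eq_add_neg] at hleft hright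
  rw [rho1starKernel, hleft, hright, hcos]
  simp only [mul_one, mul_zero, Real.cos_zero, Real.sin_zero, Real.cos_two_mul, Real.sin_two_mul]
  field_simp
  ring

lemma rho1starKernel_nonneg (w : ℝ) : 0 ≤ rho1starKernel w := by
  rcases eq_or_ne w 0 with rfl | hw
  · have houter : 0 ≤ ∫ α in (1 : ℝ)..(3 / 2), (3 / 2 - α) :=
      intervalIntegral.integral_nonneg (by norm_num) fun α hα => sub_nonneg.2 hα.2
    norm_num [rho1starKernel]
    linarith
  · rw [← mul_div_cancel₀ w two_ne_zero, rho1starKernel_two_mul (by simpa)]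
    exact div_nonneg (sub_nonneg.2 (one_sub_cos_mul_three_sub_le _)) (by positivity)

variable {g : ℝ → ℝ}

lemma rho1star_eq (g : ℝ → ℝ) :
    rho1star g = (fourierT g 0).re + 2 * (∫ α in (0 : ℝ)..1, (fourierT g α).re * α) +
      2 * ∫ α in (1 : ℝ)..(3 / 2), (fourierT g α).re * (3 / 2 - α) := by
  have hinner := intervalIntegral_comp_abs (fun α => (fourierT g α).re * α) zero_le_one
  have houter := setIntegral_comp_abs_of_mem_Icc (fun α => (fourierT g α).re * (3 / 2 - α))
    zero_le_one (show (1 : ℝ) ≤ 3 / 2 by norm_num)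
  simp only [fourierT_re_abs] at hinner houter
  rw [rho1star, hinner, ← houter]
  rfl

lemma rho1star_eq_integral_mul_kernel (hg : Integrable g) :
    rho1star g = ∫ x, g x * rho1starKernel (2 * Real.pi * x) := by
  have hinner : Integrable (fun α : ℝ => α) (volume.restrict (Ioc 0 1)) :=
    (continuous_id.integrableOn_Icc).mono_set Ioc_subset_Icc_self
  have houter : Integrable (fun α : ℝ => 3 / 2 - α) (volume.restrict (Ioc 1 (3 / 2))) :=
    ((by fun_prop : Continuous _).integrableOn_Icc).mono_set Ioc_subset_Icc_self
  have hint_inner := (integrable_mul_integral_cos_mul hg hinner).const_mul 2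
  have hint_outer := (integrable_mul_integral_cos_mul hg houter).const_mul 2
  have hone_le : (1 : ℝ) ≤ 3 / 2 := by norm_num
  simp only [rho1star_eq, rho1starKernel, intervalIntegral.integral_of_le zero_le_one,
    intervalIntegral.integral_of_le hone_le]
  rw [fourierT_re hg, integral_fourierT_re_mul hg hinner, integral_fourierT_re_mul hg houter,
    ← integral_const_mul, ← integral_const_mul]
  simp only [mul_zero, zero_mul, Real.cos_zero, mul_one]
  rw [← integral_add hg hint_inner, ← integral_add (hg.fun_add hint_inner) hint_outer]
  congr 1 with x
  ring

lemma rho1star_nonneg (hg : Integrable g) (h_nonneg : ∀ x, 0 ≤ g x) : 0 ≤ rho1star g := by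
  rw [rho1star_eq_integral_mul_kernel hg]
  exact integral_nonneg fun x => mul_nonneg (h_nonneg x) (rho1starKernel_nonneg _)

lemma C1star_le_rho1star_div (hg : memA1 g) (hg₀ : 0 < g 0) : C1star ≤ rho1star g / g 0 := by
  refine csInf_le ⟨0, ?_⟩ ⟨g, hg, fun h => by simp [h] at hg₀, hg₀, rfl⟩
  rintro _ ⟨g', ⟨-, -, h_nonneg, hint, -⟩, -, hg'₀, rfl⟩
  exact div_nonneg (rho1star_nonneg hint h_nonneg) hg'₀.le

lemma rho1star_of_fourierT_re_eq_dilation {f : ℝ → ℝ} (hf : Continuous f) {r : ℝ} (hr : r ≠ 0)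
    (hg : ∀ α, (fourierT g α).re = r * f (r * α)) :
    rho1star g = r * f 0 + 2 / r * (∫ x in (0 : ℝ)..r, f x * x) +
      3 * (∫ x in r..(3 / 2 * r), f x) - 2 / r * ∫ x in r..(3 / 2 * r), f x * x := by
  have hinner := integral_dilation_mul_affine (a := 0) (b := 1) hr (hf.intervalIntegrable _ _) 0 1
  have houter := integral_dilation_mul_affine (a := 1) (b := 3 / 2) hr
    (hf.intervalIntegrable _ _) (3 / 2) (-1)
  simp only [zero_add, zero_mul, one_mul, neg_one_mul, ← sub_eq_add_neg, mul_zero, mul_one]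
    at hinner houter
  simp only [rho1star_eq, hg, hinner, houter, mul_zero, mul_comm r (3 / 2)]
  ring

end Rho1star

section LastSign

variable {f : ℝ → ℝ}

lemma lastSign_set_nonempty (hf : ∃ r : ℝ, ∀ x : ℝ, r ≤ |x| → f x ≤ 0) :
    {r : ℝ | 0 < r ∧ ∀ x : ℝ, r ≤ |x| → f x ≤ 0}.Nonempty := by
  obtain ⟨R, hR⟩ := hf
  exact ⟨max R 1, by positivity, fun x hx => hR x ((le_max_left _ _).trans hx)⟩

lemma lastSign_pos (hcont : ContinuousAt f 0) (hf₀ : 0 < f 0)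
    (hf : ∃ r : ℝ, ∀ x : ℝ, r ≤ |x| → f x ≤ 0) : 0 < lastSign f := by
  obtain ⟨ε, hε, hpos⟩ := Metric.eventually_nhds_iff.1 (hcont.eventually (lt_mem_nhds hf₀))
  refine hε.trans_le (le_csInf (lastSign_set_nonempty hf) ?_)
  rintro s ⟨hs, hs_nonpos⟩
  by_contra! hlt
  have hdist : dist s 0 < ε := by rwa [Real.dist_0_eq_abs, abs_of_pos hs]
  exact (hpos hdist).not_ge (hs_nonpos s (le_abs_self s))

lemma nonpos_of_lastSign_le_abs (hcont : Continuous f)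
    (hf : ∃ r : ℝ, ∀ x : ℝ, r ≤ |x| → f x ≤ 0) {x : ℝ} (hx : lastSign f ≤ |x|) : f x ≤ 0 := by
  have of_lt {y : ℝ} (hy : lastSign f < |y|) : f y ≤ 0 := by
    obtain ⟨s, ⟨-, hs⟩, hsy⟩ := exists_lt_of_csInf_lt (lastSign_set_nonempty hf) hy
    exact hs y hsy.le
  have hclosed : IsClosed {y | f y ≤ 0} := isClosed_le hcont continuous_const
  rcases le_abs.1 hx with hx | hx
  · have : Ioi (lastSign f) ⊆ {y | f y ≤ 0} := fun y hy => of_lt (lt_abs.2 (.inl hy))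
    exact closure_minimal this hclosed (closure_Ioi (lastSign f) ▸ hx)
  · have : Iio (-lastSign f) ⊆ {y | f y ≤ 0} := fun y hy => of_lt (lt_abs.2 (.inr (lt_neg.1 hy)))
    exact closure_minimal this hclosed (closure_Iio (-lastSign f) ▸ le_neg.1 hx)

end LastSign

section DilatedTransform

/-- The test function `x ↦ f̂(x / r)`, which turns a linear programming function `f` that is
non-positive outside `(-r, r)` into an element of `A₁`. -/
def dilatedTransform (f : ℝ → ℝ) (r x : ℝ) : ℝ :=
  (fourierT f (x / r)).re

variable {f : ℝ → ℝ} {r : ℝ}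

lemma fourierT_re_dilatedTransform (hcont : Continuous f) (heven : ∀ x, f (-x) = f x)
    (hint : Integrable f) (hf_hat : Integrable fun α => (fourierT f α).re) (hr : 0 < r) (α : ℝ) :
    (fourierT (dilatedTransform f r) α).re = r * f (r * α) := by
  have h := fourierT_comp_div (fun x => (fourierT f x).re) hr.ne' α
  rw [fourierT_fourierT_re hcont heven hint hf_hat, abs_of_pos hr, ← Complex.ofReal_mul] at h
  exact congrArg Complex.re h

lemma memA1_dilatedTransform (hcont : Continuous f) (heven : ∀ x, f (-x) = f x)
    (hint : Integrable f) (h_nonneg : ∀ α, 0 ≤ (fourierT f α).re) (hr : 0 < r)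
    (hf_nonpos : ∀ x, r ≤ |x| → f x ≤ 0) : memA1 (dilatedTransform f r) := by
  have hf_hat := integrable_fourierT_re_of_nonneg hint hcont.continuousAt h_nonneg
  refine ⟨?_, fun x => ?_, fun x => h_nonneg _, hf_hat.comp_div hr.ne', fun α hα => ?_⟩
  · exact Complex.continuous_re.comp ((continuous_fourierT hint).comp (by fun_prop))
  · rw [dilatedTransform, neg_div, fourierT_re_neg, dilatedTransform]
  · rw [fourierT_re_dilatedTransform hcont heven hint hf_hat hr]
    refine mul_nonpos_of_nonneg_of_nonpos hr.le (hf_nonpos _ ?_)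
    rw [abs_mul, abs_of_pos hr]
    exact le_mul_of_one_le_right hr.le hα

end DilatedTransform

theorem statement14_general {f : ℝ → ℝ} (hcont : Continuous f) (heven : ∀ x, f (-x) = f x)
    (hint : Integrable f) (h_nonneg : ∀ α, 0 ≤ (fourierT f α).re) (h_pos : 0 < (fourierT f 0).re)
    {r : ℝ} (hr : 0 < r) (hf_nonpos : ∀ x, r ≤ |x| → f x ≤ 0) :
    C1star ≤ (r * f 0 + 2 / r * (∫ x in (0 : ℝ)..r, f x * x) +
      3 * (∫ x in r..(3 / 2 * r), f x) - 2 / r * ∫ x in r..(3 / 2 * r), f x * x) /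
        (fourierT f 0).re := by
  have hf_hat := integrable_fourierT_re_of_nonneg hint hcont.continuousAt h_nonneg
  have h_zero : dilatedTransform f r 0 = (fourierT f 0).re := by rw [dilatedTransform, zero_div]
  rw [← h_zero, ← rho1star_of_fourierT_re_eq_dilation hcont hr.ne'
    (fourierT_re_dilatedTransform hcont heven hint hf_hat hr)]
  exact C1star_le_rho1star_div
    (memA1_dilatedTransform hcont heven hint h_nonneg hr hf_nonpos) (h_zero ▸ h_pos)

/-- For every `f ∈ A_LP` one has `C₁* ≤ Z̃(f)`. -/
theorem statement14 (f : ℝ → ℝ) (hf : memALP f) : C1star ≤ Ztilde f := by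
  obtain ⟨hcont, heven, hint, hf₀, hf_hat₀, h_nonneg, hf⟩ := hf
  simpa [Ztilde, hf₀, hf_hat₀] using
    statement14_general hcont heven hint h_nonneg (by simp [hf_hat₀])
      (lastSign_pos hcont.continuousAt (by simp [hf₀]) hf)
      fun _ => nonpos_of_lastSign_le_abs hcont hf

end
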